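/- Let $\mathbb{R}_{\max}=\mathbb{R}\cup\{-\infty\}$ be the max-plus semiring, whose addition is $\max$ and whose multiplication is $+$; for a $d\times d$ matrix $A$ and a vector $v$ with entries in $\mathbb{R}_{\max}$, write $(A\otimes v)_i=\max_j(A_{ij}+v_j)$. Let $(A(n))_{n\in\mathbb{Z}}$ be a stationary and ergodic sequence of random $d\times d$ matrices with entries in $\mathbb{R}_{\max}$ such that the positive part of $\max_{ij}A_{ij}(0)$ is integrable. For $n\in\mathbb{N}$ put $x(n,0)=A(n-1)\otimes\cdots\otimes A(0)\otimes 0$ and $y(n,0)=A(-1)\otimes\cdots\otimes A(-n)\otimes 0$, where the last factor $0$ is the zero vector. Then there exists a constant $\gamma\in\mathbb{R}\cup\{-\infty\}$ such that $\frac1n\max_i x_i(n,0)$ converges to $\gamma$ almost surely and $\frac1n\max_i y_i(n,0)$ converges to $\gamma$ almost surely. (This constant is called the maximal Lyapunov exponent $\gamma(A)$.) -/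

import Mathlib

open Filter MeasureTheory Topology

noncomputable section

/-- Max-plus product of a `d × d` matrix and a vector: `(A ⊗ v) i = max_j (A i j + v j)`.
The semiring `ℝ_max = ℝ ∪ {-∞}` is encoded as the elements of `EReal` other than `⊤`;
on these, the addition of `EReal` is the product of `ℝ_max`. -/
def mpVec {d : ℕ} (A : Fin d → Fin d → EReal) (v : Fin d → EReal) : Fin d → EReal :=
  fun i => ⨆ j, A i j + v j

/-- `mpApply A m v n = A (m + n - 1) ⊗ ⋯ ⊗ A (m + 1) ⊗ A m ⊗ v` (`n` matrices). -/
def mpApply {d : ℕ} (A : ℤ → Fin d → Fin d → EReal) (m : ℤ) (v : Fin d → EReal) :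
    ℕ → Fin d → EReal
  | 0 => v
  | n + 1 => mpVec (A (m + n)) (mpApply A m v n)

/-- `x(n, 0) = A(n-1) ⊗ ⋯ ⊗ A(0) ⊗ 0`. -/
def xVec {d : ℕ} (A : ℤ → Fin d → Fin d → EReal) (n : ℕ) : Fin d → EReal :=
  mpApply A 0 (fun _ => 0) n

/-- `y(n, 0) = A(-1) ⊗ ⋯ ⊗ A(-n) ⊗ 0`. -/
def yVec {d : ℕ} (A : ℤ → Fin d → Fin d → EReal) (n : ℕ) : Fin d → EReal :=
  mpApply A (-n) (fun _ => 0) n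

/-- The left shift on two-sided sequences. -/
def seqShift {E : Type*} (u : ℤ → E) : ℤ → E := fun n => u (n + 1)

/-- A sequence `(X n)_{n ∈ ℤ}` of random variables is stationary and ergodic if its law on the
space of two-sided sequences is preserved by the shift (stationarity) and the shift is
ergodic for this law; `Ergodic` contains both. -/
def IsStationaryErgodic {Ω E : Type*} [MeasurableSpace Ω] [MeasurableSpace E]
    (X : ℤ → Ω → E) (μ : Measure Ω) : Prop :=
  (∀ n, Measurable (X n)) ∧ Ergodic (seqShift (E := E)) (μ.map fun ω n => X n ω)

end

/-!
The largest entry `g n` of `x(n, 0)` is a subadditive cocycle over the shift, with values in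
`ℝ ∪ {-∞}`, so the claim for `x` is Kingman's theorem without a lower integrability bound.
The lower limit of `g n / n` is subinvariant under the shift, hence almost surely a constant `c`,
and Fatou's lemma gives `c ≠ ⊤`. For a real `M > c`, almost every point is the start of some block
along which `g n - n M ≤ 0`. Concatenating such blocks of bounded length greedily bounds the
positive part of `g n - n M` by a Birkhoff sum of a function of small integral, supported where no
short block starts or the first step is expensive. By the maximal ergodic inequality this positive
part is `o(n)`, hence the upper limit of `g n / n` is at most `c`.

Since `y(n, 0)` is `x(n, 0)` evaluated at the sequence shifted back by `n` steps, its largest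
entry is a subadditive cocycle over the inverse shift. Kingman's theorem gives a constant limit for
it as well, and the two constants agree because `x(n, 0)` and `y(n, 0)` have the same law.
-/

open Set Function
open scoped ENNReal

section Greedy

variable {X : Type*} {T : X → X}

theorem exists_le_le_add_of_forall_exists_block {P : X → ℕ → Prop} {N : ℕ}
    (hzero : ∀ x, P x 0) (hadd : ∀ x m n, P x m → P (T^[m] x) n → P x (m + n))
    (hblock : ∀ x, ∃ n ≤ N, P x (n + 1)) (n : ℕ) (x : X) : ∃ m ≤ n, n ≤ m + N ∧ P x m := by
  induction n using Nat.strong_induction_on generalizing x with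
  | _ n ih =>
    rcases le_or_gt n N with hnN | hNn
    · exact ⟨0, n.zero_le, by simpa using hnN, hzero x⟩
    · obtain ⟨k, hkN, hk⟩ := hblock x
      obtain ⟨m, hmn, hnm, hm⟩ := ih (n - (k + 1)) (by omega) (T^[k + 1] x)
      exact ⟨k + 1 + m, by omega, by omega, hadd x _ _ hk hm⟩

theorem monotone_birkhoffSum {M : Type*} [AddCommMonoid M] [PartialOrder M]
    [CanonicallyOrderedAdd M] [IsOrderedAddMonoid M] (T : X → X) (φ : X → M) (x : X) :
    Monotone fun n => birkhoffSum T φ n x := fun _ _ hmn =>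
  Finset.sum_le_sum_of_subset (Finset.range_mono hmn)

theorem birkhoffSum_le_birkhoffSum {M : Type*} [AddCommMonoid M] [PartialOrder M]
    [IsOrderedAddMonoid M] {φ ψ : X → M} (h : φ ≤ ψ) (n : ℕ) (x : X) :
    birkhoffSum T φ n x ≤ birkhoffSum T ψ n x :=
  Finset.sum_le_sum fun _ _ => h _

theorem birkhoffSum_const {M : Type*} [AddCommMonoid M] (T : X → X) (a : M) (n : ℕ) (x : X) :
    birkhoffSum T (fun _ => a) n x = n • a := by
  simp [birkhoffSum]

theorem birkhoffSum_indicator_le {φ : X → ℝ≥0∞} {E : Set X} {ε : ℝ≥0∞} {N : ℕ}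
    (hE : ∀ x ∈ E, ∃ n ≤ N, ε * (n + 1 : ℕ) ≤ birkhoffSum T φ (n + 1) x) (n : ℕ) (x : X) :
    birkhoffSum T (E.indicator fun _ => ε) n x ≤ birkhoffSum T φ (n + N) x := by
  obtain ⟨m, hmn, hnm, hm⟩ := exists_le_le_add_of_forall_exists_block (T := T) (N := N)
    (P := fun x m => birkhoffSum T (E.indicator fun _ => ε) m x ≤ birkhoffSum T φ m x)
    (fun x => by simp)
    (fun x k l hk hl => by simpa only [birkhoffSum_add] using add_le_add hk hl)
    (fun x => by
      by_cases hx : x ∈ E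
      · obtain ⟨k, hkN, hk⟩ := hE x hx
        refine ⟨k, hkN, le_trans ?_ hk⟩
        refine (birkhoffSum_le_birkhoffSum (indicator_le_self' fun _ _ => zero_le) _ _).trans_eq ?_
        rw [birkhoffSum_const, nsmul_eq_mul, mul_comm]
      · exact ⟨0, N.zero_le, by simp [hx]⟩)
    (n + N) x
  exact (monotone_birkhoffSum T _ x (by omega)).trans
    (hm.trans (monotone_birkhoffSum T φ x hmn))

end Greedy

theorem le_of_forall_natCast_mul_le_add {a b c : ℝ≥0∞} (hc : c ≠ ∞)
    (h : ∀ n : ℕ, n * a ≤ n * b + c) : a ≤ b := by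
  refine ENNReal.le_of_forall_pos_le_add fun δ hδ _ => ?_
  obtain ⟨n, hn⟩ := ENNReal.exists_nat_mul_gt (ENNReal.coe_ne_zero.2 hδ.ne') hc
  have hn0 : (n : ℝ≥0∞) ≠ 0 := fun h0 => by simp [h0] at hn
  rw [← ENNReal.mul_le_mul_iff_right hn0 (ENNReal.natCast_ne_top n), mul_add]
  exact (h n).trans (by gcongr)

section MaximalInequality

variable {X : Type*} [MeasurableSpace X] {ν : Measure X} {T : X → X} {φ : X → ℝ≥0∞}

theorem measurable_birkhoffSum (hT : Measurable T) (hφ : Measurable φ) (n : ℕ) :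
    Measurable (birkhoffSum T φ n) :=
  Finset.measurable_sum _ fun i _ => hφ.comp (hT.iterate i)

theorem lintegral_birkhoffSum (hT : MeasurePreserving T ν ν) (hφ : Measurable φ) (n : ℕ) :
    ∫⁻ x, birkhoffSum T φ n x ∂ν = n * ∫⁻ x, φ x ∂ν := by
  simp only [birkhoffSum]
  rw [lintegral_finsetSum _ fun i _ => by exact hφ.comp (hT.iterate i).measurable]
  simp [(hT.iterate _).lintegral_comp hφ]

theorem mul_measure_exists_le_lt_birkhoffSum_le (hT : MeasurePreserving T ν ν)
    (hφ : Measurable φ) (ε : ℝ≥0∞) (N : ℕ) :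
    ε * ν {x | ∃ n ≤ N, ε * n < birkhoffSum T φ n x} ≤ ∫⁻ x, φ x ∂ν := by
  set E := {x | ∃ n ≤ N, ε * n < birkhoffSum T φ n x}
  have hE : MeasurableSet E := by
    have : E = ⋃ n ≤ N, {x | ε * n < birkhoffSum T φ n x} := by ext; simp [E]
    rw [this]
    exact .iUnion fun n => .iUnion fun _ =>
      measurableSet_lt measurable_const (measurable_birkhoffSum hT.measurable hφ n)
  have hblock : ∀ x ∈ E, ∃ n ≤ N, ε * (n + 1 : ℕ) ≤ birkhoffSum T φ (n + 1) x := by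
    rintro x ⟨_ | n, hnN, hn⟩
    · simp at hn
    · exact ⟨n, by omega, hn.le⟩
  by_cases hfin : ∫⁻ x, φ x ∂ν = ∞
  · simp [hfin]
  refine le_of_forall_natCast_mul_le_add
    (ENNReal.mul_ne_top (ENNReal.natCast_ne_top N) hfin) fun n => ?_
  calc n * (ε * ν E) = ∫⁻ x, birkhoffSum T (E.indicator fun _ => ε) n x ∂ν := by
        rw [lintegral_birkhoffSum hT (measurable_const.indicator hE), lintegral_indicator_const hE]
    _ ≤ ∫⁻ x, birkhoffSum T φ (n + N) x ∂ν :=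
        lintegral_mono (birkhoffSum_indicator_le hblock n)
    _ = n * ∫⁻ x, φ x ∂ν + N * ∫⁻ x, φ x ∂ν := by
        rw [lintegral_birkhoffSum hT hφ, Nat.cast_add, add_mul]

theorem mul_measure_exists_lt_birkhoffSum_le (hT : MeasurePreserving T ν ν)
    (hφ : Measurable φ) (ε : ℝ≥0∞) :
    ε * ν {x | ∃ n : ℕ, ε * n < birkhoffSum T φ n x} ≤ ∫⁻ x, φ x ∂ν := by
  rw [ofPred_exists, measure_iUnion_eq_iSup_accumulate, ENNReal.mul_iSup]
  refine iSup_le fun N => ?_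
  have hset : accumulate (fun n : ℕ => {x | ε * n < birkhoffSum T φ n x}) N
      = {x | ∃ n ≤ N, ε * n < birkhoffSum T φ n x} := by
    ext
    simp [mem_accumulate]
  rw [hset]
  exact mul_measure_exists_le_lt_birkhoffSum_le hT hφ ε N

end MaximalInequality

/-- A cocycle over `T` that is subadditive: the cost `g (m + n) x` of the first `m + n` steps of the
orbit of `x` is at most the cost of the first `m` steps plus the cost of the next `n` steps. Asking
for `g 0 ≤ 0` rather than `g 0 = 0` admits cocycles with values `-∞`. -/
structure IsSubadditiveCocycle {X M : Type*} [AddMonoid M] [LE M] (T : X → X) (g : ℕ → X → M) :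
    Prop where
  apply_zero_le : ∀ x, g 0 x ≤ 0
  apply_add_le : ∀ m n x, g (m + n) x ≤ g m x + g n (T^[m] x)

namespace IsSubadditiveCocycle

section Algebra

variable {X M : Type*} [AddCommMonoid M] [PartialOrder M] {S T : X → X} {g g' : ℕ → X → M}

theorem nsmul_const (T : X → X) (a : M) : IsSubadditiveCocycle T fun n _ => n • a where
  apply_zero_le _ := (zero_nsmul a).le
  apply_add_le m n _ := (add_nsmul a m n).le

theorem backward (hg : IsSubadditiveCocycle T g) (h : LeftInverse T S) :
    IsSubadditiveCocycle S fun n x => g n (S^[n] x) where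
  apply_zero_le := hg.apply_zero_le
  apply_add_le m n x :=
    calc g (m + n) (S^[m + n] x) = g (n + m) (S^[n] (S^[m] x)) := by
          rw [add_comm, iterate_add_apply]
      _ ≤ g n (S^[n] (S^[m] x)) + g m (T^[n] (S^[n] (S^[m] x))) := hg.apply_add_le n m _
      _ = g m (S^[m] x) + g n (S^[n] (S^[m] x)) := by rw [h.iterate n, add_comm]

variable [IsOrderedAddMonoid M]

theorem add (hg : IsSubadditiveCocycle T g) (hg' : IsSubadditiveCocycle T g') :
    IsSubadditiveCocycle T fun n x => g n x + g' n x where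
  apply_zero_le x := add_nonpos (hg.apply_zero_le x) (hg'.apply_zero_le x)
  apply_add_le m n x :=
    (add_le_add (hg.apply_add_le m n x) (hg'.apply_add_le m n x)).trans_eq (add_add_add_comm ..)

theorem le_birkhoffSum (hg : IsSubadditiveCocycle T g) (n : ℕ) (x : X) :
    g n x ≤ birkhoffSum T (g 1) n x := by
  induction n with
  | zero => simpa using hg.apply_zero_le x
  | succ n ih =>
    rw [birkhoffSum_succ]
    exact (hg.apply_add_le n 1 x).trans (by gcongr)

end Algebra

theorem toENNReal {X : Type*} {T : X → X} {g : ℕ → X → EReal} (hg : IsSubadditiveCocycle T g) :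
    IsSubadditiveCocycle T fun n x => (g n x).toENNReal where
  apply_zero_le x := (EReal.toENNReal_of_nonpos (hg.apply_zero_le x)).le
  apply_add_le m n x :=
    (EReal.toENNReal_le_toENNReal (hg.apply_add_le m n x)).trans EReal.toENNReal_add_le

end IsSubadditiveCocycle

theorem limsup_div_natCast_le {a : ℕ → ℝ≥0∞} {C ε : ℝ≥0∞} (hC : C ≠ ∞)
    (h : ∀ n : ℕ, a n ≤ C + ε * n) : limsup (fun n : ℕ => a n / n) atTop ≤ ε := by
  have hlim : Tendsto (fun n : ℕ => C / n + ε) atTop (𝓝 ε) := by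
    simpa using (ENNReal.Tendsto.const_div ENNReal.tendsto_nat_nhds_top (.inr hC)).add_const ε
  rw [← hlim.limsup_eq]
  refine limsup_le_limsup ?_
  filter_upwards [eventually_ne_atTop 0] with n hn
  have hn' : (n : ℝ≥0∞) ≠ 0 := Nat.cast_ne_zero.2 hn
  calc a n / n ≤ (C + ε * n) / n := by gcongr; exact h n
    _ = C / n + ε := by
      rw [ENNReal.add_div, ENNReal.mul_div_cancel_right hn' (ENNReal.natCast_ne_top n)]

section FreeBlock

variable {X : Type*} {p : ℕ → X → ℝ≥0∞}

/-- The points at which a step costs at most `N` and from which some nonempty block of at most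
`N + 1` steps is free. -/
def freeBlockSet (p : ℕ → X → ℝ≥0∞) (N : ℕ) : Set X :=
  {x | p 1 x ≤ N ∧ ∃ n ≤ N, p (n + 1) x = 0}

theorem monotone_freeBlockSet (p : ℕ → X → ℝ≥0∞) : Monotone (freeBlockSet p) :=
  fun _ _ h _ ⟨h1, n, hn, h0⟩ => ⟨h1.trans (Nat.cast_le.2 h), n, hn.trans h, h0⟩

variable [MeasurableSpace X] {ν : Measure X}

theorem measurableSet_freeBlockSet (hp : ∀ n, Measurable (p n)) (N : ℕ) :
    MeasurableSet (freeBlockSet p N) := by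
  have : freeBlockSet p N = {x | p 1 x ≤ N} ∩ ⋃ n ≤ N, {x | p (n + 1) x = 0} := by
    ext
    simp [freeBlockSet]
  rw [this]
  exact (measurableSet_le (hp 1) measurable_const).inter
    (.iUnion fun n => .iUnion fun _ => hp (n + 1) (measurableSet_singleton 0))

theorem tendsto_setLIntegral_compl_freeBlockSet [IsFiniteMeasure ν]
    (hp : ∀ n, Measurable (p n)) (hint : ∫⁻ x, p 1 x ∂ν ≠ ∞)
    (hfree : ∀ᵐ x ∂ν, ∃ n, p (n + 1) x = 0) :
    Tendsto (fun N => ∫⁻ x in (freeBlockSet p N)ᶜ, p 1 x ∂ν) atTop (𝓝 0) := by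
  have hnull : ν (⋂ N, (freeBlockSet p N)ᶜ) = 0 := by
    rw [measure_eq_zero_iff_ae_notMem]
    filter_upwards [hfree, ae_lt_top (hp 1) hint] with x ⟨n, hn⟩ hx hmem
    obtain ⟨K, hK⟩ := ENNReal.exists_nat_gt hx.ne
    refine mem_iInter.1 hmem (max K n) ⟨hK.le.trans ?_, n, le_max_right K n, hn⟩
    exact Nat.cast_le.2 (le_max_left K n)
  refine tendsto_setLIntegral_zero hint (hnull ▸ tendsto_measure_iInter_atTop
    (fun N => (measurableSet_freeBlockSet hp N).compl.nullMeasurableSet)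
    (fun _ _ h => compl_subset_compl.2 (monotone_freeBlockSet p h)) ⟨0, measure_ne_top _ _⟩)

end FreeBlock

namespace IsSubadditiveCocycle

variable {X : Type*} {T : X → X} {p : ℕ → X → ℝ≥0∞}

/-- Follow free blocks from the points of `freeBlockSet p N` and pay for single steps elsewhere;
`N * N` pays for the at most `N` steps left when the last block would overrun time `n`. -/
theorem le_mul_add_birkhoffSum_indicator (hp : IsSubadditiveCocycle T p) (N n : ℕ) (x : X) :
    p n x ≤ N * N + birkhoffSum T ((freeBlockSet p N)ᶜ.indicator (p 1)) n x := by
  set φ := (freeBlockSet p N)ᶜ.indicator (p 1)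
  have hstep : p 1 ≤ fun x => N + φ x := fun x => by
    by_cases hx : x ∈ freeBlockSet p N
    · exact hx.1.trans le_self_add
    · simp [φ, hx]
  obtain ⟨m, hmn, hnm, hm⟩ := exists_le_le_add_of_forall_exists_block (T := T) (N := N)
    (P := fun x m => p m x ≤ birkhoffSum T φ m x)
    (fun x => by simpa using hp.apply_zero_le x)
    (fun x k l hk hl => (hp.apply_add_le k l x).trans
      (by simpa only [birkhoffSum_add] using add_le_add hk hl))
    (fun x => by
      by_cases hx : x ∈ freeBlockSet p N
      · obtain ⟨k, hkN, hk⟩ := hx.2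
        exact ⟨k, hkN, by simp [hk]⟩
      · exact ⟨0, N.zero_le, by simp [φ, hx]⟩)
    n x
  obtain ⟨l, rfl⟩ := Nat.exists_eq_add_of_le hmn
  have hl : p l (T^[m] x) ≤ N * N + birkhoffSum T φ l (T^[m] x) :=
    calc p l (T^[m] x) ≤ birkhoffSum T (fun x => N + φ x) l (T^[m] x) :=
          (hp.le_birkhoffSum l _).trans (birkhoffSum_le_birkhoffSum hstep l _)
      _ = l * N + birkhoffSum T φ l (T^[m] x) := by
          rw [← Pi.add_def (fun _ => (N : ℝ≥0∞)) φ, birkhoffSum_add', birkhoffSum_const,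
            nsmul_eq_mul]
      _ ≤ N * N + birkhoffSum T φ l (T^[m] x) := by
          gcongr
          omega
  calc p (m + l) x ≤ birkhoffSum T φ m x + (N * N + birkhoffSum T φ l (T^[m] x)) :=
        (hp.apply_add_le m l x).trans (add_le_add hm hl)
    _ = N * N + birkhoffSum T φ (m + l) x := by rw [birkhoffSum_add, add_left_comm]

variable [MeasurableSpace X] {ν : Measure X}

theorem mul_measure_lt_limsup_div_le (hp : IsSubadditiveCocycle T p)
    (hT : MeasurePreserving T ν ν) (hpm : ∀ n, Measurable (p n)) (ε : ℝ≥0∞) (N : ℕ) :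
    ε * ν {x | ε < limsup (fun n : ℕ => p n x / n) atTop}
      ≤ ∫⁻ x in (freeBlockSet p N)ᶜ, p 1 x ∂ν := by
  rw [← lintegral_indicator (measurableSet_freeBlockSet hpm N).compl]
  refine le_trans (mul_le_mul_right (measure_mono fun x hx => ?_) _)
    (mul_measure_exists_lt_birkhoffSum_le hT
      ((hpm 1).indicator (measurableSet_freeBlockSet hpm N).compl) ε)
  contrapose! hx with hle
  simp only [mem_ofPred_eq, not_exists, not_lt] at hle ⊢
  exact limsup_div_natCast_le (by finiteness) fun n =>
    (hp.le_mul_add_birkhoffSum_indicator N n x).trans (add_le_add le_rfl (hle n))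

theorem ae_tendsto_div_zero [IsFiniteMeasure ν] (hp : IsSubadditiveCocycle T p)
    (hT : MeasurePreserving T ν ν) (hpm : ∀ n, Measurable (p n)) (hint : ∫⁻ x, p 1 x ∂ν ≠ ∞)
    (hfree : ∀ᵐ x ∂ν, ∃ n, p (n + 1) x = 0) :
    ∀ᵐ x ∂ν, Tendsto (fun n : ℕ => p n x / n) atTop (𝓝 0) := by
  have hlim := tendsto_setLIntegral_compl_freeBlockSet hpm hint hfree
  have hle : ∀ k : ℕ, ∀ᵐ x ∂ν, limsup (fun n : ℕ => p n x / n) atTop ≤ (k : ℝ≥0∞)⁻¹ := fun k => by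
    have hzero := ge_of_tendsto' hlim (hp.mul_measure_lt_limsup_div_le hT hpm (k : ℝ≥0∞)⁻¹)
    rw [nonpos_iff_eq_zero, mul_eq_zero, or_iff_right (by simp)] at hzero
    simpa only [ae_iff, not_le] using hzero
  filter_upwards [ae_all_iff.2 hle] with x hx
  exact tendsto_of_le_liminf_of_limsup_le zero_le
    (ge_of_tendsto' ENNReal.tendsto_inv_nat_nhds_zero hx)

end IsSubadditiveCocycle

theorem comp_ae_eq_of_ae_le_comp {X β : Type*} [MeasurableSpace X] [LinearOrder β]
    [TopologicalSpace β] [OrderTopology β] [SecondCountableTopology β] [MeasurableSpace β]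
    [OpensMeasurableSpace β] {ν : Measure X} [IsFiniteMeasure ν] {T : X → X}
    (hT : MeasurePreserving T ν ν) {f : X → β} (hf : Measurable f)
    (hle : f ≤ᵐ[ν] f ∘ T) : f ∘ T =ᵐ[ν] f := by
  refine .of_forall_eventually_lt_iff fun c => ?_
  have hs : MeasurableSet {x | f x < c} := hf measurableSet_Iio
  have hsub : T ⁻¹' {x | f x < c} ≤ᵐ[ν] {x | f x < c} := by
    filter_upwards [hle] with x hx hTx using hx.trans_lt hTx
  exact (ae_eq_of_ae_subset_of_measure_ge hsub (hT.measure_preimage hs.nullMeasurableSet).ge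
    (hT.measurable hs).nullMeasurableSet (measure_ne_top ν _)).mem_iff

theorem toENNReal_div_natCast (a : EReal) {n : ℕ} (hn : n ≠ 0) :
    (a / (n : EReal)).toENNReal = a.toENNReal / n := by
  have hinv : ((n : EReal)⁻¹).toENNReal = (n : ℝ≥0∞)⁻¹ := by
    have hpos : (0 : ℝ) < n := by positivity
    rw [← EReal.coe_natCast, ← EReal.coe_inv, EReal.real_coe_toENNReal,
      ENNReal.ofReal_inv_of_pos hpos, ENNReal.ofReal_natCast]
  rw [div_eq_mul_inv, EReal.toENNReal_mul' (EReal.inv_nonneg_of_nonneg n.cast_nonneg'), hinv,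
    div_eq_mul_inv]

theorem toENNReal_add_nsmul_neg_div_natCast (a : EReal) (M : ℝ) {n : ℕ} (hn : n ≠ 0) :
    (a + n • (-M : EReal)).toENNReal / n = (a / (n : EReal) - M).toENNReal := by
  have hn' : (n : EReal) ≠ 0 := Nat.cast_ne_zero.2 hn
  rw [← toENNReal_div_natCast _ hn, EReal.add_div_of_nonneg_right n.cast_nonneg',
    EReal.nsmul_eq_mul, ← EReal.mul_div,
    EReal.mul_div_cancel (EReal.natCast_ne_bot n) (EReal.natCast_ne_top n) hn', sub_eq_add_neg]

theorem limsup_le_of_tendsto_toENNReal_sub {ι : Type*} {l : Filter ι} {a : ι → EReal} {M : ℝ}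
    (h : Tendsto (fun i => (a i - M).toENNReal) l (𝓝 0)) : limsup a l ≤ M := by
  rcases l.eq_or_neBot with rfl | _
  · simp
  have hle : ∀ i, a i ≤ ((a i - M).toENNReal : EReal) + M := fun i => by
    rw [← EReal.sub_le_iff_le_add (by simp) (by simp), EReal.coe_toENNReal_eq_max]
    exact le_max_right _ _
  have hcoe : Tendsto (fun i => ((a i - M).toENNReal : EReal)) l (𝓝 0) :=
    (continuous_coe_ennreal_ereal.tendsto 0).comp h
  have hlim : Tendsto (fun i => ((a i - M).toENNReal : EReal) + M) l (𝓝 M) := by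
    simpa [comp_def] using
      (EReal.continuousAt_add (p := (0, (M : EReal))) (by simp) (by simp)).tendsto.comp
        (hcoe.prodMk_nhds tendsto_const_nhds)
  exact (limsup_le_limsup (.of_forall hle)).trans_eq hlim.limsup_eq

theorem liminf_div_natCast_le_of_le_const_add {a b : ℕ → EReal} {r : ℝ}
    (h : ∀ n, a (n + 1) ≤ r + b n) :
    liminf (fun n : ℕ => a n / (n : EReal)) atTop
      ≤ liminf (fun n : ℕ => b n / (n : EReal)) atTop := by
  rw [← liminf_nat_add _ 1, ← EReal.le_of_forall_lt_iff_le]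
  intro M hM
  obtain ⟨M', hM', hM'M⟩ := EReal.lt_iff_exists_real_btwn.1 hM
  have hpos : 0 < M - M' := sub_pos.2 (EReal.coe_lt_coe_iff.1 hM'M)
  refine liminf_le_of_frequently_le' (((frequently_lt_of_liminf_lt (h := hM')).and_eventually
    ((eventually_gt_atTop 0).and (tendsto_natCast_atTop_atTop.eventually_ge_atTop
      ((r - M) / (M - M'))))).mono ?_)
  rintro n ⟨hb, hn, hnr⟩
  have hcast : ∀ {n : ℕ}, 0 < n → (0 : EReal) < n := fun hn => by exact_mod_cast hn
  rw [EReal.div_le_iff_le_mul (hcast n.succ_pos) (EReal.natCast_ne_top _)]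
  calc a (n + 1) ≤ r + n * M' := (h n).trans (add_le_add le_rfl
        ((EReal.div_le_iff_le_mul (hcast hn) (EReal.natCast_ne_top n)).1 hb.le))
    _ ≤ (n + 1 : ℕ) * M := by
        rw [div_le_iff₀ hpos] at hnr
        norm_cast
        push_cast
        linarith

namespace IsSubadditiveCocycle

variable {X : Type*} {T : X → X} {g : ℕ → X → EReal}

theorem liminf_div_le_liminf_div_apply (hg : IsSubadditiveCocycle T g) {x : X}
    (hx : g 1 x ≠ ⊤) :
    liminf (fun n : ℕ => g n x / (n : EReal)) atTop
      ≤ liminf (fun n : ℕ => g n (T x) / (n : EReal)) atTop :=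
  liminf_div_natCast_le_of_le_const_add (r := (g 1 x).toReal) fun n => by
    rw [add_comm n 1]
    exact (hg.apply_add_le 1 n x).trans (add_le_add (EReal.le_coe_toReal hx) le_rfl)

variable [MeasurableSpace X] {ν : Measure X}

theorem lintegral_toENNReal_liminf_div_le (hg : IsSubadditiveCocycle T g)
    (hT : MeasurePreserving T ν ν) (hgm : ∀ n, Measurable (g n)) :
    ∫⁻ x, (liminf (fun n : ℕ => g n x / (n : EReal)) atTop).toENNReal ∂ν
      ≤ ∫⁻ x, (g 1 x).toENNReal ∂ν := by
  have hmono : Monotone EReal.toENNReal := fun _ _ => EReal.toENNReal_le_toENNReal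
  have hmeas : ∀ n : ℕ, Measurable fun x => (g n x / (n : EReal)).toENNReal := fun n =>
    ((hgm n).mul_const _).ereal_toENNReal
  simp only [hmono.map_liminf_of_continuousAt _ EReal.continuous_toENNReal.continuousAt]
  refine (lintegral_liminf_le hmeas).trans (liminf_le_of_frequently_le'
    (Eventually.frequently ((eventually_ne_atTop 0).mono fun n hn => ?_)))
  have hn' : (n : ℝ≥0∞) ≠ 0 := Nat.cast_ne_zero.2 hn
  calc ∫⁻ x, (g n x / (n : EReal)).toENNReal ∂ν
      ≤ ∫⁻ x, birkhoffSum T (fun x => (g 1 x).toENNReal) n x / n ∂ν := lintegral_mono fun x => by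
        rw [toENNReal_div_natCast _ hn]
        gcongr
        exact hg.toENNReal.le_birkhoffSum n x
    _ = ∫⁻ x, (g 1 x).toENNReal ∂ν := by
        simp only [div_eq_mul_inv]
        rw [lintegral_mul_const' _ _ (ENNReal.inv_ne_top.2 hn'),
          lintegral_birkhoffSum hT (hgm 1).ereal_toENNReal, mul_right_comm,
          ENNReal.mul_inv_cancel hn' (ENNReal.natCast_ne_top n), one_mul]

variable [IsFiniteMeasure ν]

theorem exists_ae_liminf_div_eq [NeZero ν] (hg : IsSubadditiveCocycle T g) (hT : Ergodic T ν)
    (hgm : ∀ n, Measurable (g n)) (hint : ∫⁻ x, (g 1 x).toENNReal ∂ν ≠ ∞) :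
    ∃ c ≠ ⊤, ∀ᵐ x ∂ν, liminf (fun n : ℕ => g n x / (n : EReal)) atTop = c := by
  have hmeas : Measurable fun x => liminf (fun n : ℕ => g n x / (n : EReal)) atTop :=
    .liminf fun n => (hgm n).mul_const _
  have hle : ∀ᵐ x ∂ν, liminf (fun n : ℕ => g n x / (n : EReal)) atTop
      ≤ liminf (fun n : ℕ => g n (T x) / (n : EReal)) atTop := by
    filter_upwards [ae_lt_top (hgm 1).ereal_toENNReal hint] with x hx
    exact hg.liminf_div_le_liminf_div_apply (EReal.toENNReal_ne_top_iff.1 hx.ne)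
  obtain ⟨c, hc⟩ := hT.ae_eq_const_of_ae_eq_comp₀ hmeas.nullMeasurable
    (comp_ae_eq_of_ae_le_comp hT.toMeasurePreserving hmeas hle)
  refine ⟨c, ?_, hc⟩
  rintro rfl
  refine hint (top_le_iff.1 (le_trans ?_
    (hg.lintegral_toENNReal_liminf_div_le hT.toMeasurePreserving hgm)))
  have htop : ∀ᵐ x ∂ν, (liminf (fun n : ℕ => g n x / (n : EReal)) atTop).toENNReal = ∞ :=
    hc.mono fun x hx => EReal.toENNReal_eq_top_iff.2 hx
  simp [lintegral_congr_ae htop, NeZero.ne ν]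

theorem ae_limsup_div_le (hg : IsSubadditiveCocycle T g) (hT : MeasurePreserving T ν ν)
    (hgm : ∀ n, Measurable (g n)) (hint : ∫⁻ x, (g 1 x).toENNReal ∂ν ≠ ∞) {M : ℝ}
    (hM : ∀ᵐ x ∂ν, liminf (fun n : ℕ => g n x / (n : EReal)) atTop < M) :
    ∀ᵐ x ∂ν, limsup (fun n : ℕ => g n x / (n : EReal)) atTop ≤ M := by
  have hp := (hg.add (nsmul_const T (-M : EReal))).toENNReal
  have hpint : ∫⁻ x, (g 1 x + 1 • (-M : EReal)).toENNReal ∂ν ≠ ∞ := by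
    refine ne_top_of_le_ne_top ?_ (lintegral_mono fun x => EReal.toENNReal_add_le)
    rw [lintegral_add_right _ measurable_const, lintegral_const]
    have : (1 • (-M : EReal)).toENNReal ≠ ∞ := by simp
    finiteness
  have hfree : ∀ᵐ x ∂ν, ∃ n : ℕ, (g (n + 1) x + (n + 1) • (-M : EReal)).toENNReal = 0 := by
    filter_upwards [hM] with x hx
    obtain ⟨_ | n, hn, hn0⟩ :=
      ((frequently_lt_of_liminf_lt (h := hx)).and_eventually (eventually_ne_atTop 0)).exists
    · exact absurd rfl hn0
    · refine ⟨n, ?_⟩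
      have hzero := toENNReal_add_nsmul_neg_div_natCast (g (n + 1) x) M hn0
      rw [EReal.toENNReal_of_nonpos (EReal.sub_nonpos.2 hn.le), ENNReal.div_eq_zero_iff] at hzero
      exact hzero.resolve_right (ENNReal.natCast_ne_top _)
  filter_upwards [hp.ae_tendsto_div_zero hT
    (fun n => ((hgm n).add_const _).ereal_toENNReal) hpint hfree] with x hx
  refine limsup_le_of_tendsto_toENNReal_sub (hx.congr' ?_)
  filter_upwards [eventually_ne_atTop 0] with n hn
  exact toENNReal_add_nsmul_neg_div_natCast _ M hn

theorem exists_ae_tendsto_div [NeZero ν] (hg : IsSubadditiveCocycle T g) (hT : Ergodic T ν)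
    (hgm : ∀ n, Measurable (g n)) (hint : ∫⁻ x, (g 1 x).toENNReal ∂ν ≠ ∞) :
    ∃ c ≠ ⊤, ∀ᵐ x ∂ν, Tendsto (fun n : ℕ => g n x / (n : EReal)) atTop (𝓝 c) := by
  obtain ⟨c, hc, hliminf⟩ := hg.exists_ae_liminf_div_eq hT hgm hint
  have hlimsup : ∀ q : ℚ, c < (q : ℝ) →
      ∀ᵐ x ∂ν, limsup (fun n : ℕ => g n x / (n : EReal)) atTop ≤ (q : ℝ) := fun q hq =>
    hg.ae_limsup_div_le hT.toMeasurePreserving hgm hint (hliminf.mono fun x hx => hx.trans_lt hq)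
  refine ⟨c, hc, ?_⟩
  filter_upwards [hliminf, ae_all_iff.2 fun q => ae_all_iff.2 (hlimsup q)] with x hx hxq
  refine tendsto_of_le_liminf_of_limsup_le hx.ge (le_of_forall_gt_imp_ge_of_dense fun b hb => ?_)
  obtain ⟨q, hcq, hqb⟩ := EReal.lt_iff_exists_rat_btwn.1 hb
  exact (hxq q hcq).trans hqb.le

end IsSubadditiveCocycle

theorem eq_of_ae_tendsto_of_map_eq {X X' Y : Type*} [MeasurableSpace X] [MeasurableSpace X']
    [TopologicalSpace Y] [T2Space Y] [MeasurableSpace Y] [OpensMeasurableSpace Y] {ν : Measure X}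
    {ν' : Measure X'} [IsFiniteMeasure ν] [NeZero ν] [IsFiniteMeasure ν'] {f : ℕ → X → Y}
    {f' : ℕ → X' → Y} (hf : ∀ n, Measurable (f n)) (hf' : ∀ n, Measurable (f' n))
    (hmap : ∀ n, ν.map (f n) = ν'.map (f' n)) {c c' : Y}
    (hc : ∀ᵐ x ∂ν, Tendsto (fun n => f n x) atTop (𝓝 c))
    (hc' : ∀ᵐ x ∂ν', Tendsto (fun n => f' n x) atTop (𝓝 c')) : c = c' := by
  by_contra hne
  obtain ⟨U, V, hU, hV, hcU, hcV, hUV⟩ := t2_separation hne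
  have hfull : Tendsto (fun n => ν (f n ⁻¹' U)) atTop (𝓝 (ν univ)) := by
    refine tendsto_measure_of_ae_tendsto_indicator_of_isFiniteMeasure _ .univ
      (fun n => hf n hU.measurableSet) ?_
    filter_upwards [hc] with x hx
    filter_upwards [hx.eventually (hU.mem_nhds hcU)] with n hn using iff_of_true hn trivial
  have hnull : Tendsto (fun n => ν' (f' n ⁻¹' U)) atTop (𝓝 (ν' ∅)) := by
    refine tendsto_measure_of_ae_tendsto_indicator_of_isFiniteMeasure _ .empty
      (fun n => hf' n hU.measurableSet) ?_
    filter_upwards [hc'] with x hx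
    filter_upwards [hx.eventually (hV.mem_nhds hcV)] with n hn using
      iff_of_false (hUV.notMem_of_mem_right hn) id
  have hmeas : ∀ n, ν (f n ⁻¹' U) = ν' (f' n ⁻¹' U) := fun n => by
    rw [← Measure.map_apply (hf n) hU.measurableSet, hmap,
      Measure.map_apply (hf' n) hU.measurableSet]
  have huniv := tendsto_nhds_unique hfull (by simpa only [hmeas] using hnull)
  rw [measure_empty, Measure.measure_univ_eq_zero] at huniv
  exact NeZero.ne ν huniv

theorem IsSubadditiveCocycle.exists_ae_tendsto_div_and_symm {X : Type*} [MeasurableSpace X]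
    {ν : Measure X} [IsFiniteMeasure ν] [NeZero ν] {e : X ≃ᵐ X} {g : ℕ → X → EReal}
    (hg : IsSubadditiveCocycle e g) (he : Ergodic e ν) (hgm : ∀ n, Measurable (g n))
    (hint : ∫⁻ x, (g 1 x).toENNReal ∂ν ≠ ∞) :
    ∃ c ≠ ⊤, (∀ᵐ x ∂ν, Tendsto (fun n : ℕ => g n x / (n : EReal)) atTop (𝓝 c)) ∧
      ∀ᵐ x ∂ν, Tendsto (fun n : ℕ => g n (e.symm^[n] x) / (n : EReal)) atTop (𝓝 c) := by
  have hsymm := he.toMeasurePreserving.symm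
  obtain ⟨c, hc, hforward⟩ := hg.exists_ae_tendsto_div he hgm hint
  obtain ⟨c', -, hbackward⟩ := (hg.backward e.right_inv).exists_ae_tendsto_div he.symm
    (fun n => (hgm n).comp (hsymm.iterate n).measurable)
    (by simpa using (hsymm.lintegral_comp (hgm 1).ereal_toENNReal).trans_ne hint)
  have havg : ∀ n : ℕ, Measurable fun x => g n x / (n : EReal) := fun n => (hgm n).mul_const _
  have hmap : ∀ n : ℕ, ν.map (fun x => g n (e.symm^[n] x) / (n : EReal))
      = ν.map fun x => g n x / (n : EReal) := fun n => by
    have h := Measure.map_map (μ := ν) (havg n) (hsymm.iterate n).measurable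
    rw [(hsymm.iterate n).map_eq] at h
    exact h.symm
  obtain rfl := eq_of_ae_tendsto_of_map_eq (fun n => (havg n).comp (hsymm.iterate n).measurable)
    havg hmap hbackward hforward
  exact ⟨c', hc, hforward, hbackward⟩

theorem lintegral_toENNReal_ne_top_of_integrable_max {Ω : Type*} [MeasurableSpace Ω]
    {μ : Measure Ω} {f : Ω → EReal} (hf : ∀ᵐ ω ∂μ, f ω ≠ ⊤)
    (hint : Integrable (fun ω => (max (f ω) 0).toReal) μ) : ∫⁻ ω, (f ω).toENNReal ∂μ ≠ ∞ := by
  refine ne_top_of_le_ne_top hint.lintegral_lt_top.ne (lintegral_mono_ae ?_)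
  filter_upwards [hf] with ω hω
  rw [← EReal.toENNReal_of_ne_top (max_lt hω.lt_top EReal.zero_lt_top).ne]
  exact EReal.toENNReal_le_toENNReal (le_max_left _ _)

section MaxPlus

variable {d : ℕ}

theorem mpVec_mono (A : Fin d → Fin d → EReal) : Monotone (mpVec A) := fun _ _ h _ =>
  iSup_mono fun j => add_le_add le_rfl (h j)

theorem mpVec_add_const_le (A : Fin d → Fin d → EReal) (v : Fin d → EReal) (s : EReal) :
    mpVec A (fun i => v i + s) ≤ fun i => mpVec A v i + s := fun i =>
  iSup_le fun j => by
    rw [← add_assoc]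
    exact add_le_add (le_iSup (fun j => A i j + v j) j) le_rfl

theorem mpApply_mono (A : ℤ → Fin d → Fin d → EReal) (m : ℤ) (n : ℕ) :
    Monotone fun v => mpApply A m v n := by
  induction n with
  | zero => exact monotone_id
  | succ n ih => exact (mpVec_mono _).comp ih

theorem mpApply_add_const_le (A : ℤ → Fin d → Fin d → EReal) (m : ℤ) (v : Fin d → EReal)
    (s : EReal) (n : ℕ) : mpApply A m (fun i => v i + s) n ≤ fun i => mpApply A m v n i + s := by
  induction n with
  | zero => exact le_rfl
  | succ n ih => exact (mpVec_mono _ ih).trans (mpVec_add_const_le _ _ _)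

theorem mpApply_add (A : ℤ → Fin d → Fin d → EReal) (m : ℤ) (v : Fin d → EReal) (n k : ℕ) :
    mpApply A m v (n + k) = mpApply A (m + n) (mpApply A m v n) k := by
  induction k with
  | zero => rfl
  | succ k ih =>
    rw [← add_assoc, mpApply, mpApply, ih]
    push_cast
    rw [add_assoc m]

theorem seqShift_iterate {E : Type*} (k : ℕ) (u : ℤ → E) :
    seqShift^[k] u = fun n => u (n + k) := by
  induction k with
  | zero => simp
  | succ k ih =>
    rw [iterate_succ_apply', ih]
    funext n
    rw [seqShift, add_assoc, add_comm (1 : ℤ), Nat.cast_succ]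

theorem mpApply_seqShift_iterate (A : ℤ → Fin d → Fin d → EReal) (k : ℕ) (m : ℤ)
    (v : Fin d → EReal) (n : ℕ) : mpApply (seqShift^[k] A) m v n = mpApply A (m + k) v n := by
  induction n with
  | zero => rfl
  | succ n ih => rw [mpApply, mpApply, ih, seqShift_iterate, add_right_comm]

theorem yVec_seqShift_iterate (A : ℤ → Fin d → Fin d → EReal) (n : ℕ) :
    yVec (seqShift^[n] A) n = xVec A n := by
  rw [yVec, mpApply_seqShift_iterate, neg_add_cancel, xVec]

theorem xVec_add_le (A : ℤ → Fin d → Fin d → EReal) (m n : ℕ) (i : Fin d) :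
    xVec A (m + n) i ≤ (⨆ j, xVec A m j) + xVec (seqShift^[m] A) n i := by
  have hle : xVec A m ≤ fun _ => 0 + ⨆ j, xVec A m j := fun j => by
    rw [zero_add]
    exact le_iSup (xVec A m) j
  calc xVec A (m + n) i = mpApply (seqShift^[m] A) 0 (xVec A m) n i := by
        rw [mpApply_seqShift_iterate, xVec, mpApply_add, xVec]
    _ ≤ mpApply (seqShift^[m] A) 0 (fun _ => 0 + ⨆ j, xVec A m j) n i := mpApply_mono _ _ n hle i
    _ ≤ xVec (seqShift^[m] A) n i + ⨆ j, xVec A m j := mpApply_add_const_le _ _ (fun _ => 0) _ n i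
    _ = (⨆ j, xVec A m j) + xVec (seqShift^[m] A) n i := add_comm _ _

theorem measurable_mpApply (m : ℤ) (v : Fin d → EReal) (n : ℕ) (i : Fin d) :
    Measurable fun A : ℤ → Fin d → Fin d → EReal => mpApply A m v n i := by
  induction n generalizing i with
  | zero => exact measurable_const
  | succ n ih =>
    refine .iSup fun j => .add ?_ (ih j)
    exact (measurable_pi_apply j).comp ((measurable_pi_apply i).comp (measurable_pi_apply _))

/-- The largest entry `max_i x_i(n, 0)`, with the sequence of matrices as last argument so that
it is a cocycle over the shift. -/
noncomputable def xMax (n : ℕ) (A : ℤ → Fin d → Fin d → EReal) : EReal :=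
  ⨆ i, xVec A n i

theorem xMax_one (A : ℤ → Fin d → Fin d → EReal) : xMax 1 A = ⨆ i, ⨆ j, A 0 i j := by
  simp [xMax, xVec, mpApply, mpVec]

theorem measurable_xMax (n : ℕ) : Measurable (xMax (d := d) n) :=
  .iSup fun i => measurable_mpApply 0 _ n i

theorem isSubadditiveCocycle_xMax : IsSubadditiveCocycle seqShift (xMax (d := d)) where
  apply_zero_le _ := iSup_le fun _ => le_rfl
  apply_add_le m n A := iSup_le fun i =>
    (xVec_add_le A m n i).trans (add_le_add le_rfl (le_iSup (xVec _ n) i))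

/-- The left shift on two-sided sequences as a measurable equivalence; its inverse is the right
shift. -/
def seqShiftEquiv (E : Type*) [MeasurableSpace E] : (ℤ → E) ≃ᵐ (ℤ → E) where
  toFun := seqShift
  invFun u n := u (n - 1)
  left_inv u := by ext n; simp [seqShift]
  right_inv u := by ext n; simp [seqShift]
  measurable_toFun := measurable_pi_lambda _ fun n => measurable_pi_apply (n + 1)
  measurable_invFun := measurable_pi_lambda _ fun n => measurable_pi_apply (n - 1)

theorem iSup_yVec_eq_xMax (A : ℤ → Fin d → Fin d → EReal) (n : ℕ) :
    ⨆ i, yVec A n i = xMax n ((seqShiftEquiv _).symm^[n] A) := by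
  have h : seqShift^[n] ((seqShiftEquiv _).symm^[n] A) = A :=
    LeftInverse.iterate (seqShiftEquiv _).right_inv n A
  rw [xMax, ← yVec_seqShift_iterate, h]

theorem iSup_ne_top_of_forall_ne_top {ι : Type*} [Finite ι] {f : ι → EReal}
    (hf : ∀ i, f i ≠ ⊤) : ⨆ i, f i ≠ ⊤ := by
  cases isEmpty_or_nonempty ι
  · simp
  · obtain ⟨i, hi⟩ := exists_eq_ciSup_of_finite (f := f)
    exact hi ▸ hf i

theorem lintegral_toENNReal_xMax_one_ne_top {Ω : Type*} [MeasurableSpace Ω] {μ : Measure Ω}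
    {A : ℤ → Ω → Fin d → Fin d → EReal} (hA : Measurable fun ω n => A n ω)
    (hnotop : ∀ᵐ ω ∂μ, ∀ i j, A 0 ω i j ≠ ⊤)
    (hint : Integrable (fun ω => (max (⨆ i, ⨆ j, A 0 ω i j) 0).toReal) μ) :
    ∫⁻ u, (xMax 1 u).toENNReal ∂(μ.map fun ω n => A n ω) ≠ ∞ := by
  rw [lintegral_map (measurable_xMax 1).ereal_toENNReal hA]
  simp only [xMax_one]
  refine lintegral_toENNReal_ne_top_of_integrable_max ?_ hint
  filter_upwards [hnotop] with ω hω
  exact iSup_ne_top_of_forall_ne_top fun i => iSup_ne_top_of_forall_ne_top (hω i)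

end MaxPlus

theorem maximal_lyapunov_exponent_exists
    {d : ℕ} {Ω : Type*} [MeasurableSpace Ω] (μ : Measure Ω) [IsProbabilityMeasure μ]
    (A : ℤ → Ω → Fin d → Fin d → EReal)
    (hA : IsStationaryErgodic A μ)
    (hnotop : ∀ n ω i j, A n ω i j ≠ ⊤)
    (hint : Integrable (fun ω => (max (⨆ i, ⨆ j, A 0 ω i j) 0).toReal) μ) :
    ∃ γ : EReal, γ ≠ ⊤ ∧
      (∀ᵐ ω ∂μ, Tendsto (fun n : ℕ => (⨆ i, xVec (fun k => A k ω) n i) / (n : EReal))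
        atTop (𝓝 γ)) ∧
      (∀ᵐ ω ∂μ, Tendsto (fun n : ℕ => (⨆ i, yVec (fun k => A k ω) n i) / (n : EReal))
        atTop (𝓝 γ)) := by
  obtain ⟨hmeas, herg⟩ := hA
  have hpath : Measurable fun ω n => A n ω := measurable_pi_lambda _ hmeas
  have : IsProbabilityMeasure (μ.map fun ω n => A n ω) :=
    Measure.isProbabilityMeasure_map hpath.aemeasurable
  have hg : IsSubadditiveCocycle (seqShiftEquiv (Fin d → Fin d → EReal)) xMax :=
    isSubadditiveCocycle_xMax
  obtain ⟨γ, hγ, hx, hy⟩ := hg.exists_ae_tendsto_div_and_symm herg measurable_xMax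
    (lintegral_toENNReal_xMax_one_ne_top hpath (.of_forall (hnotop 0)) hint)
  simp only [← iSup_yVec_eq_xMax] at hy
  exact ⟨γ, hγ, ae_of_ae_map hpath.aemeasurable hx, ae_of_ae_map hpath.aemeasurable hy⟩
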